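/- For all n ≥ 0, T_2(3n+1) ≡ T_2(243n+91) (mod 24), and 3·T_2(3n+1) ≡ T_2(27n+10) (mod 24). -/

import Mathlib

noncomputable def Tcount (ℓ k n : ℕ) : ℕ :=
  Nat.card {f : Fin k → Σ m : ℕ, Nat.Partition m //
    (∑ i, (f i).1) = n ∧ ∀ i, ∀ p ∈ (f i).2.parts, ¬ ℓ ∣ p}

/-!
With `f₁ = ∏ (1 - qⁱ)`, `f₂ = ∏ (1 - q²ⁱ)` and `θ = ∑ (-1)ᵏ q ^ k²`, Gauss's identity
`θ = f₁² / f₂` gives `f₂³ / f₁³ = f₁³ θ / θ⁴`, and `θ⁴ ≡ 1` modulo `8` because `f₁² ≡ f₂` modulo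
`2`. Jacobi's series for `f₁³` then turns the coefficient of `q ^ N` into the sum of `x (-1)ʸ` over
the solutions of `x² + 8y² = 8N + 1` with `x ≡ 1` modulo `4`. Since `8(9N + 1) + 1 = 9(8N + 1)`, the
elements `1 ± √-8` of norm `9` relate the solutions for `9N + 1` to those for `N`, which shows that
the coefficient at `9N + 1` is `3` times the coefficient at `N` modulo `8`. Modulo `3` the series
`f₂³ / f₁³` is a power series in `q³`.

The identities of Gauss and Jacobi are the limits of finite identities for Gaussian binomial
coefficients. They are proved for an element `x` with `x ^ K = 0`, such as `q` in `R⟦q⟧ / (q ^ K)`,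
where the limit is attained.
-/

open Finset

section GaussianBinomial

variable {R : Type*} [CommRing R]

/-- The finite Euler product `(q; q)ₙ = (1 - q)(1 - q²)⋯(1 - qⁿ)`. -/
def eulerProd (q : R) (n : ℕ) : R :=
  ∏ i ∈ range n, (1 - q ^ (i + 1))

/-- The Gaussian binomial coefficient `[i + j choose i]` in base `q`, defined by Pascal's rule.
It is indexed by the two complementary sizes `i` and `j`, so that a row is an antidiagonal. -/
def gaussBinom (q : R) : ℕ → ℕ → R
  | 0, _ => 1
  | _ + 1, 0 => 1
  | i + 1, j + 1 => gaussBinom q i (j + 1) + q ^ (i + 1) * gaussBinom q (i + 1) j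

lemma eulerProd_succ (q : R) (n : ℕ) :
    eulerProd q (n + 1) = eulerProd q n * (1 - q ^ (n + 1)) :=
  prod_range_succ _ _

lemma gaussBinom_zero_left (q : R) (j : ℕ) : gaussBinom q 0 j = 1 := by
  rw [gaussBinom]

lemma gaussBinom_zero_right (q : R) (i : ℕ) : gaussBinom q i 0 = 1 := by
  cases i <;> rw [gaussBinom]

lemma gaussBinom_mul_eulerProd_mul_eulerProd (q : R) (i j : ℕ) :
    gaussBinom q i j * eulerProd q i * eulerProd q j = eulerProd q (i + j) := by
  fun_induction gaussBinom q i j with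
  | case1 j => simp [eulerProd]
  | case2 i => simp [eulerProd]
  | case3 i j ih₁ ih₂ =>
    rw [show i.succ + j.succ = i + 1 + j + 1 by omega, eulerProd_succ q (i + 1 + j)]
    rw [show i + (j + 1) = i + 1 + j by ring, eulerProd_succ q j] at ih₁
    rw [eulerProd_succ q i] at ih₂
    rw [eulerProd_succ q i, eulerProd_succ q j]
    linear_combination (1 - q ^ (i + 1)) * ih₁ + q ^ (i + 1) * (1 - q ^ (j + 1)) * ih₂

lemma sum_antidiagonal_succ_gaussBinom_mul (q : R) (f : ℕ → ℕ → R) (n : ℕ) :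
    ∑ p ∈ antidiagonal (n + 1), gaussBinom q p.1 p.2 * f p.1 p.2 =
      ∑ p ∈ antidiagonal n,
        gaussBinom q p.1 p.2 * (f (p.1 + 1) p.2 + q ^ p.1 * f p.1 (p.2 + 1)) := by
  cases n with
  | zero => simp [Nat.antidiagonal_succ, gaussBinom, add_comm]
  | succ n =>
    simp only [mul_add, sum_add_distrib]
    rw [Nat.sum_antidiagonal_succ, Nat.sum_antidiagonal_succ',
      Nat.sum_antidiagonal_succ' (n := n), Nat.sum_antidiagonal_succ (n := n)]
    simp only [gaussBinom, gaussBinom_zero_left, gaussBinom_zero_right, add_mul, sum_add_distrib]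
    have (p : ℕ × ℕ) : q ^ (p.1 + 1) * gaussBinom q (p.1 + 1) p.2 * f (p.1 + 1) (p.2 + 1) =
        gaussBinom q (p.1 + 1) p.2 * (q ^ (p.1 + 1) * f (p.1 + 1) (p.2 + 1)) := by ring
    simp only [this]
    ring

-- The operators on `f` in the two Pascal rules commute, so one rule follows from the other.
lemma sum_antidiagonal_succ_gaussBinom_mul' (q : R) (f : ℕ → ℕ → R) (n : ℕ) :
    ∑ p ∈ antidiagonal (n + 1), gaussBinom q p.1 p.2 * f p.1 p.2 =
      ∑ p ∈ antidiagonal n,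
        gaussBinom q p.1 p.2 * (q ^ p.2 * f (p.1 + 1) p.2 + f p.1 (p.2 + 1)) := by
  induction n generalizing f with
  | zero => simp [Nat.antidiagonal_succ, gaussBinom, add_comm]
  | succ n ih =>
    rw [sum_antidiagonal_succ_gaussBinom_mul,
      ih fun i j ↦ f (i + 1) j + q ^ i * f i (j + 1),
      sum_antidiagonal_succ_gaussBinom_mul q fun i j ↦ q ^ j * f (i + 1) j + f i (j + 1)]
    exact sum_congr rfl fun p _ ↦ by ring

lemma sum_antidiagonal_gaussBinom_add_two {q : R} {w : ℤ → R} {n δ : ℕ} {μ : R}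
    (hw : ∀ i j : ℕ, i + j = 2 * n + δ →
      q ^ j * w (i - n + 1) + q ^ i * w (i - n - 1) = μ * w (i - n)) :
    ∑ p ∈ antidiagonal (2 * (n + 1) + δ), gaussBinom q p.1 p.2 * w (p.1 - (n + 1 : ℕ)) =
      (1 + μ + q ^ (2 * n + δ + 1)) *
        ∑ p ∈ antidiagonal (2 * n + δ), gaussBinom q p.1 p.2 * w (p.1 - n) := by
  rw [show 2 * (n + 1) + δ = 2 * n + δ + 1 + 1 by ring,
    sum_antidiagonal_succ_gaussBinom_mul q fun i _ ↦ w (i - (n + 1 : ℕ)),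
    sum_antidiagonal_succ_gaussBinom_mul' q fun i _ ↦
      w ((i + 1 : ℕ) - (n + 1 : ℕ)) + q ^ i * w (i - (n + 1 : ℕ)), mul_sum]
  refine sum_congr rfl fun p hp ↦ ?_
  rw [HasAntidiagonal.mem_antidiagonal] at hp
  rw [show ((p.1 + 1 + 1 : ℕ) : ℤ) - (n + 1 : ℕ) = p.1 - n + 1 by push_cast; ring,
    show ((p.1 + 1 : ℕ) : ℤ) - (n + 1 : ℕ) = p.1 - n by push_cast; ring,
    show (p.1 : ℤ) - (n + 1 : ℕ) = p.1 - n - 1 by push_cast; ring, ← hp]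
  linear_combination gaussBinom q p.1 p.2 * hw p.1 p.2 hp

end GaussianBinomial

section Nilpotent

variable {R : Type*} [CommRing R] {q x : R} {K : ℕ}

lemma isUnit_eulerProd (hq : q ^ K = 0) (n : ℕ) : IsUnit (eulerProd q n) :=
  IsUnit.prod_iff.2 fun i _ ↦
    ((show IsNilpotent q from ⟨K, hq⟩).pow_succ i).isUnit_one_sub

lemma eulerProd_eq_of_le (hq : q ^ K = 0) {n : ℕ} (hn : K ≤ n) :
    eulerProd q n = eulerProd q K := by
  induction n, hn using Nat.le_induction with
  | base => rfl
  | succ n hn ih => rw [eulerProd_succ, ih, pow_eq_zero_of_le (by omega) hq, sub_zero, mul_one]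

lemma gaussBinom_mul_eulerProd_eq_one (hq : q ^ K = 0) {i j : ℕ} (hi : K ≤ i) (hj : K ≤ j) :
    gaussBinom q i j * eulerProd q K = 1 := by
  have h := gaussBinom_mul_eulerProd_mul_eulerProd q i j
  rw [eulerProd_eq_of_le hq hi, eulerProd_eq_of_le hq hj,
    eulerProd_eq_of_le hq (hi.trans (Nat.le_add_right i j))] at h
  exact (isUnit_eulerProd hq K).mul_right_cancel (h.trans (one_mul _).symm)

lemma sum_antidiagonal_gaussBinom_mul_eulerProd (hq : q ^ K = 0) {w : ℤ → R} {n : ℕ}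
    (hw : ∀ k : ℤ, n < |k| + K → w k = 0) (δ : ℕ) :
    (∑ p ∈ antidiagonal (2 * n + δ), gaussBinom q p.1 p.2 * w (p.1 - n)) * eulerProd q K =
      ∑ k ∈ Icc (-n : ℤ) (n + δ), w k := by
  rw [sum_mul]
  refine sum_nbij' (fun p ↦ (p.1 : ℤ) - n) (fun k ↦ ((k + n).toNat, (n + δ - k).toNat))
    ?_ ?_ ?_ ?_ ?_
  · grind [HasAntidiagonal.mem_antidiagonal]
  · grind [HasAntidiagonal.mem_antidiagonal]
  · grind [HasAntidiagonal.mem_antidiagonal]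
  · grind [HasAntidiagonal.mem_antidiagonal]
  · intro p hp
    rw [HasAntidiagonal.mem_antidiagonal] at hp
    by_cases hk : (n : ℤ) < |(p.1 : ℤ) - n| + K
    · simp only [hw _ hk, mul_zero, zero_mul]
    · linear_combination w (p.1 - n) *
        gaussBinom_mul_eulerProd_eq_one hq (i := p.1) (j := p.2) (by grind) (by grind)

end Nilpotent

section GaussJacobi

variable {R : Type*} [CommRing R] {x : R} {K : ℕ}

lemma neg_one_pow_mul_pow_sq_recurrence (x : R) {n i j : ℕ} (hij : i + j = 2 * n) (k : ℤ)
    (hk : k = i - n) :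
    (x ^ 2) ^ j * (((k + 1).negOnePow : ℤ) * x ^ (k + 1).natAbs ^ 2) +
        (x ^ 2) ^ i * (((k - 1).negOnePow : ℤ) * x ^ (k - 1).natAbs ^ 2) =
      -2 * x ^ (2 * n + 1) * ((k.negOnePow : ℤ) * x ^ k.natAbs ^ 2) := by
  have hj : 2 * j + (k + 1).natAbs ^ 2 = 2 * n + 1 + k.natAbs ^ 2 := by
    zify at hij ⊢
    simp only [sq_abs]
    linear_combination 2 * hij + 2 * hk
  have hi : 2 * i + (k - 1).natAbs ^ 2 = 2 * n + 1 + k.natAbs ^ 2 := by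
    zify
    simp only [sq_abs]
    linear_combination -2 * hk
  have hj' := congrArg (x ^ ·) hj
  have hi' := congrArg (x ^ ·) hi
  simp only [pow_add, pow_mul] at hi' hj'
  simp only [Int.negOnePow_succ, Int.negOnePow_sub, Int.negOnePow_one, mul_neg, mul_one,
    Units.val_neg, Int.cast_neg]
  linear_combination -((k.negOnePow : ℤ) : R) * (hj' + hi')

lemma sum_gaussBinom_sq_eq_prod (x : R) (n : ℕ) :
    ∑ p ∈ antidiagonal (2 * n), gaussBinom (x ^ 2) p.1 p.2 *
        ((((p.1 - n : ℤ).negOnePow : ℤ) : R) * x ^ (p.1 - n : ℤ).natAbs ^ 2) =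
      (∏ i ∈ range n, (1 - x ^ (2 * i + 1))) ^ 2 := by
  induction n with
  | zero => simp [gaussBinom]
  | succ n ih =>
    have hstep := sum_antidiagonal_gaussBinom_add_two (n := n) (δ := 0)
      (w := fun k ↦ ((k.negOnePow : ℤ) : R) * x ^ k.natAbs ^ 2)
      fun i j hij ↦ neg_one_pow_mul_pow_sq_recurrence x hij _ rfl
    simp only [add_zero] at hstep
    rw [hstep, ih, prod_range_succ]
    ring

lemma prod_one_sub_pow_odd_mul_eulerProd_sq (x : R) (n : ℕ) :
    (∏ i ∈ range n, (1 - x ^ (2 * i + 1))) * eulerProd (x ^ 2) n = eulerProd x (2 * n) := by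
  induction n with
  | zero => simp [eulerProd]
  | succ n ih =>
    rw [prod_range_succ, eulerProd_succ, mul_add_one, eulerProd_succ, eulerProd_succ, ← ih]
    ring

/-- The theta series `∑ (-1) ^ k x ^ k²` of Gauss, over `|k| ≤ n`. -/
noncomputable def thetaSum (x : R) (n : ℕ) : R :=
  ∑ k ∈ Icc (-n : ℤ) n, ((k.negOnePow : ℤ) : R) * x ^ k.natAbs ^ 2

/-- Jacobi's series `∑ (4 j + 1) x ^ (2 j² + j)` for `(x; x)³`, over `|j| ≤ n`. It is
`∑ (-1) ^ m (2 m + 1) x ^ (m (m + 1) / 2)` over `m ≥ 0`, with `m = 2 j` or `m = -2 j - 1`. -/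
noncomputable def eulerCubeSum (x : R) (n : ℕ) : R :=
  ∑ j ∈ Icc (-n : ℤ) n, ((4 * j + 1 : ℤ) : R) * x ^ (2 * j ^ 2 + j).toNat

lemma map_thetaSum {S : Type*} [CommRing S] (f : R →+* S) (x : R) (n : ℕ) :
    f (thetaSum x n) = thetaSum (f x) n := by
  simp only [thetaSum, map_sum, map_mul, map_intCast, map_pow]

lemma map_eulerCubeSum {S : Type*} [CommRing S] (f : R →+* S) (x : R) (n : ℕ) :
    f (eulerCubeSum x n) = eulerCubeSum (f x) n := by
  simp only [eulerCubeSum, map_sum, map_mul, map_intCast, map_pow]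

theorem thetaSum_mul_eulerProd (hx : x ^ K = 0) {n : ℕ} (hn : 2 * K ≤ n) :
    thetaSum x n * eulerProd (x ^ 2) K = eulerProd x K ^ 2 := by
  have hx2 : (x ^ 2) ^ K = 0 := by rw [pow_right_comm, hx, zero_pow two_ne_zero]
  have hsum := sum_antidiagonal_gaussBinom_mul_eulerProd hx2 (n := n)
    (w := fun k ↦ ((k.negOnePow : ℤ) : R) * x ^ k.natAbs ^ 2) (fun k hk ↦ by
      have : K ≤ k.natAbs := by grind
      rw [pow_eq_zero_of_le (by nlinarith) hx, mul_zero]) 0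
  have hprod := prod_one_sub_pow_odd_mul_eulerProd_sq x n
  rw [eulerProd_eq_of_le hx2 (by omega), eulerProd_eq_of_le hx (by omega)] at hprod
  rw [add_zero, sum_gaussBinom_sq_eq_prod, Nat.cast_zero, add_zero, ← thetaSum] at hsum
  rw [← hsum, ← hprod]
  ring

/-- The exponent `k (k - 1) / 2` of Jacobi's identity for `(q; q)³`, for `k` of either sign. -/
def triangular (k : ℤ) : ℕ := (k * (k - 1) / 2).toNat

lemma two_mul_triangular (k : ℤ) : 2 * (triangular k : ℤ) = k * (k - 1) := by
  have hk : 0 ≤ k * (k - 1) := by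
    rcases le_or_gt k 0 with h | h <;> nlinarith
  rw [triangular, Int.toNat_of_nonneg (by omega), Int.mul_ediv_cancel' k.even_mul_pred_self.two_dvd]

lemma neg_one_pow_mul_pow_triangular_recurrence (x : R) {n i j : ℕ} (hij : i + j = 2 * n + 1)
    (k : ℤ) (hk : k = i - n) :
    x ^ j * (((-((k + 1).negOnePow * (k + 1)) : ℤ) : R) * x ^ triangular (k + 1)) +
        x ^ i * (((-((k - 1).negOnePow * (k - 1)) : ℤ) : R) * x ^ triangular (k - 1)) =
      -2 * x ^ (n + 1) * (((-(k.negOnePow * k) : ℤ) : R) * x ^ triangular k) := by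
  have htri := two_mul_triangular k
  have hj : j + triangular (k + 1) = n + 1 + triangular k := by
    have := two_mul_triangular (k + 1)
    zify at hij ⊢
    linarith
  have hi : i + triangular (k - 1) = n + 1 + triangular k := by
    have := two_mul_triangular (k - 1)
    zify
    linarith
  have hj' := congrArg (x ^ ·) hj
  have hi' := congrArg (x ^ ·) hi
  simp only [pow_add] at hi' hj'
  simp only [Int.negOnePow_succ, Int.negOnePow_sub, Int.negOnePow_one]
  push_cast
  linear_combination ((k.negOnePow : ℤ) : R) * ((k + 1) * hj' + (k - 1) * hi')

lemma sum_gaussBinom_triangular_eq_eulerProd_sq (x : R) (n : ℕ) :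
    ∑ p ∈ antidiagonal (2 * n + 1), gaussBinom x p.1 p.2 *
        (((-((p.1 - n : ℤ).negOnePow * (p.1 - n)) : ℤ) : R) * x ^ triangular (p.1 - n)) =
      eulerProd x n ^ 2 := by
  induction n with
  | zero => simp [Nat.antidiagonal_succ, gaussBinom, eulerProd, triangular]
  | succ n ih =>
    rw [sum_antidiagonal_gaussBinom_add_two
      (w := fun k ↦ ((-(k.negOnePow * k) : ℤ) : R) * x ^ triangular k) (μ := -2 * x ^ (n + 1))
      fun i j hij ↦ neg_one_pow_mul_pow_triangular_recurrence x hij _ rfl, ih, eulerProd_succ]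
    ring

lemma sum_Icc_eq_sum_even_add_odd {M : Type*} [AddCommMonoid M] (f : ℤ → M) (n : ℕ) :
    ∑ k ∈ Icc (-(2 * n : ℕ) : ℤ) ((2 * n : ℕ) + 1), f k =
      ∑ j ∈ Icc (-n : ℤ) n, (f (-2 * j) + f (2 * j + 1)) := by
  rw [← sum_filter_add_sum_filter_not _ Even, sum_add_distrib]
  congr 1 <;> symm
  · exact sum_nbij' (fun j ↦ -2 * j) (fun k ↦ -(k / 2)) (by grind) (by grind) (by grind) (by grind)
      (by simp)
  · exact sum_nbij' (fun j ↦ 2 * j + 1) (fun k ↦ k / 2) (by grind) (by grind) (by grind) (by grind)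
      (by simp)

theorem eulerProd_pow_three_eq_eulerCubeSum (hx : x ^ K = 0) {n : ℕ} (hn : K ≤ n) :
    eulerProd x K ^ 3 = eulerCubeSum x n := by
  have hsum := sum_antidiagonal_gaussBinom_mul_eulerProd hx (n := 2 * n)
    (w := fun k ↦ ((-(k.negOnePow * k) : ℤ) : R) * x ^ triangular k) (fun k hk ↦ by
      have hK : K ≤ triangular k := by
        have := two_mul_triangular k
        rcases abs_cases k with h | h <;> push_cast at hk <;> zify at hn ⊢ <;> nlinarith
      rw [pow_eq_zero_of_le hK hx, mul_zero]) 1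
  rw [sum_gaussBinom_triangular_eq_eulerProd_sq, eulerProd_eq_of_le hx (by omega), ← pow_succ,
    Nat.cast_one, sum_Icc_eq_sum_even_add_odd] at hsum
  refine hsum.trans (sum_congr rfl fun j _ ↦ ?_)
  have heven : triangular (-2 * j) = (2 * j ^ 2 + j).toNat := by
    rw [triangular]
    congr 1
    exact Int.ediv_eq_of_eq_mul_right two_ne_zero (by ring)
  have hodd : triangular (2 * j + 1) = (2 * j ^ 2 + j).toNat := by
    rw [triangular]
    congr 1
    exact Int.ediv_eq_of_eq_mul_right two_ne_zero (by ring)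
  rw [heven, hodd, neg_mul, Int.negOnePow_neg, Int.negOnePow_two_mul,
    Int.negOnePow_two_mul_add_one]
  push_cast
  ring

lemma prod_one_add_pow_mul_eulerProd (x : R) (n : ℕ) :
    (∏ i ∈ range n, (1 + x ^ (i + 1))) * eulerProd x n = eulerProd (x ^ 2) n := by
  rw [eulerProd, eulerProd, ← prod_mul_distrib]
  exact prod_congr rfl fun i _ ↦ by ring

lemma two_dvd_eulerProd_sq_sub (x : R) (n : ℕ) :
    2 ∣ eulerProd x n ^ 2 - eulerProd (x ^ 2) n := by
  induction n with
  | zero => simp [eulerProd]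
  | succ n ih =>
    rw [eulerProd_succ, eulerProd_succ]
    obtain ⟨c, hc⟩ := ih
    exact ⟨c * (1 - x ^ (n + 1)) ^ 2 - eulerProd (x ^ 2) n * x ^ (n + 1) * (1 - x ^ (n + 1)), by
      linear_combination (1 - x ^ (n + 1)) ^ 2 * hc⟩

lemma eulerProd_pow_eight_eq (h8 : (8 : R) = 0) (x : R) (n : ℕ) :
    eulerProd x n ^ 8 = eulerProd (x ^ 2) n ^ 4 := by
  have h : 8 ∣ eulerProd x n ^ 8 - eulerProd (x ^ 2) n ^ 4 := by
    convert! dvd_sub_pow_of_dvd_sub (p := 2) (mod_cast two_dvd_eulerProd_sq_sub x n) 2 using 1 <;>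
      norm_num [← pow_mul]
  rwa [h8, zero_dvd_iff, sub_eq_zero] at h

theorem prod_one_add_pow_pow_three_eq (h8 : (8 : R) = 0) (hx : x ^ K = 0) {n : ℕ}
    (hn : 2 * K ≤ n) :
    (∏ i ∈ range K, (1 + x ^ (i + 1))) ^ 3 =
      eulerCubeSum x n * thetaSum x n := by
  set P := ∏ i ∈ range K, (1 + x ^ (i + 1))
  set θ := thetaSum x n
  set E := eulerProd x K
  set E₂ := eulerProd (x ^ 2) K
  have hx2 : (x ^ 2) ^ K = 0 := by rw [pow_right_comm, hx, zero_pow two_ne_zero]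
  have hP : P * E = E₂ := prod_one_add_pow_mul_eulerProd x K
  have hθ : θ * E₂ = E ^ 2 := thetaSum_mul_eulerProd hx hn
  have h8' : E ^ 8 = E₂ ^ 4 := eulerProd_pow_eight_eq h8 x K
  rw [← eulerProd_pow_three_eq_eulerCubeSum hx (by omega : K ≤ n)]
  refine ((isUnit_eulerProd hx2 K).pow 4).mul_right_cancel ?_
  calc P ^ 3 * E₂ ^ 4 = (P * E) ^ 3 * E ^ 5 := by rw [← h8']; ring
    _ = E ^ 3 * (θ * E₂) * E₂ ^ 3 := by rw [hP, hθ]; ring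
    _ = E ^ 3 * θ * E₂ ^ 4 := by ring

end GaussJacobi

section Representations

/-- The representations of `M` by the norm form `x² + 8y²` of `ℤ[√-8]` with `x ≡ 1 [ZMOD 4]`.
This condition selects one of `x` and `-x` when `M` is odd. The box only serves to make finiteness
evident. -/
noncomputable def reps (M : ℕ) : Finset (ℤ × ℤ) :=
  {p ∈ Icc (-M : ℤ) M ×ˢ Icc (-M : ℤ) M | p.1 % 4 = 1 ∧ p.1 ^ 2 + 8 * p.2 ^ 2 = M}

/-- The sum of `x * (-1) ^ y` over the representations `(x, y)` in `reps M`. -/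
noncomputable def signedRepSum (M : ℕ) : ℤ :=
  ∑ p ∈ reps M, p.1 * p.2.negOnePow

lemma mem_reps {M : ℕ} {p : ℤ × ℤ} :
    p ∈ reps M ↔ p.1 % 4 = 1 ∧ p.1 ^ 2 + 8 * p.2 ^ 2 = M := by
  simp only [reps, mem_filter, mem_product, mem_Icc, and_iff_right_iff_imp, ← abs_le,
    Int.abs_eq_natAbs]
  intro ⟨_, h⟩
  have h₁ := Int.natAbs_le_self_sq p.1
  have h₂ := Int.natAbs_le_self_sq p.2
  exact ⟨by nlinarith, by nlinarith⟩

lemma three_dvd_sub_or_add_of_mem_reps {M : ℕ} {p : ℤ × ℤ} (hp : p ∈ reps (9 * M)) :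
    3 ∣ p.1 - p.2 ∨ 3 ∣ p.1 + p.2 := by
  obtain ⟨-, h⟩ := mem_reps.1 hp
  push_cast at h
  exact Int.prime_three.dvd_or_dvd ⟨3 * M - 3 * p.2 ^ 2, by linear_combination h⟩

lemma sum_reps_filter_three_dvd_sub (M : ℕ) :
    ∑ p ∈ reps M with 3 ∣ p.1 - p.2, p.1 * (p.2.negOnePow : ℤ) =
      ∑ p ∈ reps M with 3 ∣ p.1 + p.2, p.1 * (p.2.negOnePow : ℤ) := by
  refine sum_nbij' (fun p ↦ (p.1, -p.2)) (fun p ↦ (p.1, -p.2)) ?_ ?_ ?_ ?_ ?_ <;>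
    simp [mem_reps, sub_eq_add_neg]

-- Multiplication of the conjugate of `x + y√-8` by the norm one element `(-1 + √-8) / 3`
-- is an involution which changes the parity of `y`.
lemma sum_negOnePow_reps_filter_three_dvd_add (M : ℕ) :
    ∑ p ∈ reps M with 3 ∣ p.1 + p.2, (p.2.negOnePow : ℤ) = 0 := by
  have hparity : ∀ p ∈ {p ∈ reps M | 3 ∣ p.1 + p.2},
      (((p.1 + p.2) / 3).negOnePow : ℤ) = -p.2.negOnePow := by
    simp only [mem_filter, mem_reps]
    intro p hp
    rw [← Units.val_neg, ← Int.negOnePow_succ, Units.val_inj, Int.negOnePow_eq_iff, Int.even_iff]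
    omega
  refine sum_involution (fun p _ ↦ (3 * p.2 - (p.1 + p.2) / 3, (p.1 + p.2) / 3))
    (fun p hp ↦ ?_) (fun p hp _ h ↦ ?_) (fun p hp ↦ ?_) (fun p hp ↦ ?_)
  · rw [hparity p hp, add_neg_cancel]
  · have h₁ := hparity p hp
    rw [show (p.1 + p.2) / 3 = p.2 from congrArg Prod.snd h, self_eq_neg] at h₁
    exact p.2.negOnePow.ne_zero h₁
  · simp only [mem_filter, mem_reps] at hp ⊢
    obtain ⟨⟨h₁, h₂⟩, k, hk⟩ := hp
    rw [hk, Int.mul_ediv_cancel_left _ three_ne_zero]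
    refine ⟨⟨by omega, ?_⟩, by omega⟩
    linear_combination h₂ - (p.1 - p.2 + 3 * k) * hk
  · simp only [mem_filter, mem_reps] at hp
    ext <;> simp only <;> omega

lemma four_dvd_sum_reps_filter_three_dvd_add (M : ℕ) :
    4 ∣ ∑ p ∈ reps M with 3 ∣ p.1 + p.2, p.1 * (p.2.negOnePow : ℤ) := by
  rw [← sub_zero (∑ _ ∈ _, _), ← sum_negOnePow_reps_filter_three_dvd_add M, ← sum_sub_distrib]
  refine dvd_sum fun p hp ↦ ?_
  rw [← sub_one_mul]
  have := (mem_reps.1 (mem_filter.1 hp).1).1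
  exact Dvd.dvd.mul_right (by omega) _

lemma sum_reps_nine_mul_filter_three_dvd (M : ℕ) :
    ∑ p ∈ reps (9 * M) with 3 ∣ p.1 - p.2 ∧ 3 ∣ p.1 + p.2, p.1 * (p.2.negOnePow : ℤ) =
      -3 * signedRepSum M := by
  rw [signedRepSum, mul_sum]
  symm
  refine sum_nbij' (fun p ↦ (-3 * p.1, 3 * p.2)) (fun p ↦ (-(p.1 / 3), p.2 / 3)) ?_ ?_ ?_ ?_ ?_
  · simp only [mem_filter, mem_reps]
    rintro p ⟨h₁, h₂⟩
    push_cast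
    exact ⟨⟨by omega, by linear_combination 9 * h₂⟩, by omega, by omega⟩
  · simp only [mem_filter, mem_reps]
    rintro ⟨x, y⟩ ⟨⟨h₁, h₂⟩, h₃, h₄⟩
    obtain ⟨a, rfl⟩ : 3 ∣ x := by omega
    obtain ⟨b, rfl⟩ : 3 ∣ y := by omega
    push_cast at h₂
    rw [Int.mul_ediv_cancel_left _ three_ne_zero, Int.mul_ediv_cancel_left _ three_ne_zero]
    exact ⟨by omega, by linarith⟩
  · grind
  · simp only [mem_filter]
    grind
  · intro p _
    rw [show 3 * p.2 = p.2 + 2 * p.2 by ring, Int.negOnePow_add, Int.negOnePow_two_mul, mul_one,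
      mul_assoc]

theorem signedRepSum_nine_mul_modEq (M : ℕ) :
    signedRepSum (9 * M) ≡ 3 * signedRepSum M [ZMOD 8] := by
  have hunion : {p ∈ reps (9 * M) | 3 ∣ p.1 - p.2 ∨ 3 ∣ p.1 + p.2} = reps (9 * M) :=
    filter_true_of_mem fun p ↦ three_dvd_sub_or_add_of_mem_reps
  have hincl := sum_union_inter (s₁ := {p ∈ reps (9 * M) | 3 ∣ p.1 - p.2})
    (s₂ := {p ∈ reps (9 * M) | 3 ∣ p.1 + p.2}) (f := fun p ↦ p.1 * (p.2.negOnePow : ℤ))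
  rw [← filter_or, ← filter_and, hunion, sum_reps_nine_mul_filter_three_dvd,
    sum_reps_filter_three_dvd_sub, ← signedRepSum] at hincl
  obtain ⟨c, hc⟩ := four_dvd_sum_reps_filter_three_dvd_add (9 * M)
  exact Int.modEq_of_dvd ⟨-c, by rw [hc] at hincl; linarith⟩

end Representations

section GeneratingFunction

open PowerSeries

variable (R : Type*) [CommRing R]

/-- The generating function of `ℓ`-regular partitions, i.e. those without parts divisible by
`ℓ`. -/
noncomputable def regularSeries (ℓ : ℕ) : R⟦X⟧ :=
  PowerSeries.mk fun n ↦ (#(Nat.Partition.restricted n (¬ ℓ ∣ ·)) : R)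

/-- A `k`-tuple of `ℓ`-regular partitions of total size `n` amounts to a choice of sizes adding up
to `n` together with one `ℓ`-regular partition of each size. -/
def regularTupleEquiv (ℓ k n : ℕ) :
    {f : Fin k → Σ m : ℕ, Nat.Partition m //
      (∑ i, (f i).1) = n ∧ ∀ i, ∀ p ∈ (f i).2.parts, ¬ ℓ ∣ p} ≃
    Σ l : piAntidiag (univ : Finset (Fin k)) n,
      ∀ i, Nat.Partition.restricted (l.1 i) (¬ ℓ ∣ ·) where
  toFun f := ⟨⟨fun i ↦ (f.1 i).1, mem_piAntidiag.2 ⟨f.2.1, fun _ _ ↦ mem_univ _⟩⟩,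
    fun i ↦ ⟨(f.1 i).2, mem_filter.2 ⟨mem_univ _, f.2.2 i⟩⟩⟩
  invFun g := ⟨fun i ↦ ⟨g.1.1 i, (g.2 i).1⟩, (mem_piAntidiag.1 g.1.2).1,
    fun i ↦ (mem_filter.1 (g.2 i).2).2⟩
  left_inv _ := rfl
  right_inv _ := rfl

lemma Tcount_eq_sum_piAntidiag (ℓ k n : ℕ) :
    Tcount ℓ k n =
      ∑ l ∈ piAntidiag (univ : Finset (Fin k)) n,
        ∏ i, #(Nat.Partition.restricted (l i) (¬ ℓ ∣ ·)) := by
  rw [Tcount, Nat.card_congr (regularTupleEquiv ℓ k n), Nat.card_sigma]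
  refine Eq.trans ?_ (sum_coe_sort (piAntidiag univ n) _)
  simp

theorem natCast_Tcount (ℓ k n : ℕ) :
    (Tcount ℓ k n : R) = coeff n (regularSeries R ℓ ^ k) := by
  rw [show regularSeries R ℓ ^ k = ∏ _i : Fin k, regularSeries R ℓ by simp, coeff_prod,
    Tcount_eq_sum_piAntidiag]
  push_cast
  refine sum_nbij' (fun l ↦ Finsupp.equivFunOnFinite.symm l) (fun l ↦ l) ?_ ?_ ?_ ?_ ?_ <;>
    simp [regularSeries]

theorem dvd_Tcount_of_not_dvd {p n : ℕ} (hp : p.Prime) (hn : ¬ p ∣ n) (ℓ : ℕ) :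
    p ∣ Tcount ℓ p n := by
  have : Fact p.Prime := ⟨hp⟩
  have hfrob : regularSeries (ZMod p) ℓ ^ p =
      PowerSeries.map (frobenius (ZMod p) p) (expand p hp.ne_zero (regularSeries (ZMod p) ℓ)) :=
    (MvPowerSeries.map_frobenius_expand p hp.ne_zero).symm
  rw [← ZMod.natCast_eq_zero_iff, natCast_Tcount, hfrob, coeff_map,
    coeff_expand_of_not_dvd _ _ _ hn, map_zero]

lemma X_pow_dvd_prod_one_add_X_pow_sub {K L : ℕ} (h : K ≤ L) :
    (X : R⟦X⟧) ^ K ∣ ∏ i ∈ range L, (1 + X ^ (i + 1)) - ∏ i ∈ range K, (1 + X ^ (i + 1)) := by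
  induction L, h using Nat.le_induction with
  | base => rw [sub_self]; exact dvd_zero _
  | succ L h ih =>
    rw [prod_range_succ, mul_one_add, add_sub_right_comm]
    exact ih.add ((pow_dvd_pow X (by omega)).mul_left _)

open scoped PowerSeries.WithPiTopology in
theorem X_pow_dvd_regularSeries_two_sub_prod (K : ℕ) :
    (X : R⟦X⟧) ^ K ∣ regularSeries R 2 - ∏ i ∈ range K, (1 + X ^ (i + 1)) := by
  let : TopologicalSpace R := ⊥
  have : DiscreteTopology R := ⟨rfl⟩
  have hprod : HasProd (fun i ↦ 1 + (X : R⟦X⟧) ^ (i + 1)) (regularSeries R 2) := by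
    simp only [regularSeries, Nat.Partition.card_restricted_eq_card_countRestricted _ Nat.two_pos]
    simpa [sum_range_succ] using
      Nat.Partition.hasProd_powerSeriesMk_card_countRestricted R Nat.two_pos
  have hlim := (WithPiTopology.tendsto_iff_coeff_tendsto _ _ _ _).1 hprod.tendsto_prod_nat
  refine X_pow_dvd_iff.2 fun d hd ↦ ?_
  rw [map_sub, sub_eq_zero]
  refine tendsto_nhds_unique (hlim d) (tendsto_const_nhds.congr' ?_)
  filter_upwards [Filter.eventually_ge_atTop K] with L hL
  have hcoeff := X_pow_dvd_iff.1 (X_pow_dvd_prod_one_add_X_pow_sub R hL) d hd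
  rw [map_sub] at hcoeff
  exact (sub_eq_zero.1 hcoeff).symm

lemma coeff_mul_X_pow_mul_X_pow_natAbs_sq (N : ℕ) (j k : ℤ) :
    coeff N (((4 * j + 1 : ℤ) : R⟦X⟧) * X ^ (2 * j ^ 2 + j).toNat *
        (((k.negOnePow : ℤ) : R⟦X⟧) * X ^ k.natAbs ^ 2)) =
      if (4 * j + 1) ^ 2 + 8 * k ^ 2 = (8 * N + 1 : ℕ) then
        (((4 * j + 1) * k.negOnePow : ℤ) : R) else 0 := by
  have hj : 0 ≤ 2 * j ^ 2 + j := by rcases le_or_gt 0 j with h | h <;> nlinarith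
  have hexp : N = (2 * j ^ 2 + j).toNat + k.natAbs ^ 2 ↔
      (4 * j + 1) ^ 2 + 8 * k ^ 2 = (8 * N + 1 : ℕ) := by
    zify
    rw [Int.toNat_of_nonneg hj, sq_abs]
    constructor <;> intro h <;> linarith
  rw [mul_mul_mul_comm, ← pow_add, ← Int.cast_mul, ← map_intCast (C (R := R)), coeff_C_mul_X_pow]
  simp only [hexp]

lemma coeff_eulerCubeSum_mul_thetaSum {N n : ℕ} (hn : N ≤ n) :
    coeff N (eulerCubeSum (X : R⟦X⟧) n * thetaSum X n) = (signedRepSum (8 * N + 1) : R) := by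
  rw [eulerCubeSum, thetaSum, sum_mul_sum, ← sum_product', map_sum, signedRepSum, Int.cast_sum]
  simp only [coeff_mul_X_pow_mul_X_pow_natAbs_sq]
  rw [← sum_filter]
  symm
  refine sum_nbij' (fun p ↦ (p.1 / 4, p.2)) (fun p ↦ (4 * p.1 + 1, p.2)) ?_ ?_ ?_ ?_ ?_
  · simp only [mem_filter, mem_reps, mem_product, mem_Icc]
    rintro ⟨x, k⟩ ⟨hx, h⟩
    obtain ⟨j, rfl⟩ : ∃ j, x = 4 * j + 1 := ⟨x / 4, by omega⟩
    have hj := Int.natAbs_le_self_sq j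
    have hk := Int.natAbs_le_self_sq k
    push_cast at h
    rw [show (4 * j + 1) / 4 = j by omega]
    refine ⟨⟨abs_le.1 ?_, abs_le.1 ?_⟩, by push_cast; exact h⟩ <;> grind
  · simp only [mem_filter, mem_reps]
    rintro p ⟨-, h⟩
    exact ⟨by omega, h⟩
  · simp only [mem_reps]
    rintro p ⟨h, -⟩
    ext <;> simp only; omega
  · intro p _
    ext <;> simp only; omega
  · simp only [mem_reps]
    rintro p ⟨h, -⟩
    rw [show 4 * (p.1 / 4) + 1 = p.1 by omega]

theorem X_pow_dvd_regularSeries_two_pow_three_sub (h8 : (8 : R) = 0) {K n : ℕ} (hn : 2 * K ≤ n) :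
    (X : R⟦X⟧) ^ K ∣ regularSeries R 2 ^ 3 - eulerCubeSum X n * thetaSum X n := by
  let π := Ideal.Quotient.mk (Ideal.span {(X : R⟦X⟧) ^ K})
  have hX : π X ^ K = 0 := by
    rw [← map_pow]
    exact Ideal.Quotient.eq_zero_iff_mem.2 (Ideal.mem_span_singleton_self _)
  have h8' : (8 : R⟦X⟧ ⧸ Ideal.span {(X : R⟦X⟧) ^ K}) = 0 := by
    rw [← map_ofNat (π.comp C) 8, h8, map_zero]
  have hprod : π (regularSeries R 2) = ∏ i ∈ range K, (1 + π X ^ (i + 1)) := by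
    have h := Ideal.Quotient.eq.2
      (Ideal.mem_span_singleton.2 (X_pow_dvd_regularSeries_two_sub_prod R K))
    simpa using h
  rw [← Ideal.mem_span_singleton, ← Ideal.Quotient.eq, map_pow, map_mul, map_thetaSum,
    map_eulerCubeSum, hprod]
  exact prod_one_add_pow_pow_three_eq h8' hX hn

end GeneratingFunction

theorem natCast_Tcount_two_three (N : ℕ) :
    (Tcount 2 3 N : ZMod 8) = (signedRepSum (8 * N + 1) : ZMod 8) := by
  have hdvd := X_pow_dvd_regularSeries_two_pow_three_sub (ZMod 8) (K := N + 1) (by decide) le_rfl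
  have h := PowerSeries.X_pow_dvd_iff.1 hdvd N (by omega)
  rw [map_sub, ← natCast_Tcount, coeff_eulerCubeSum_mul_thetaSum _ (by omega)] at h
  exact sub_eq_zero.1 h

theorem Tcount_nine_mul_add_one_modEq (n : ℕ) :
    Tcount 2 3 (9 * n + 1) ≡ 3 * Tcount 2 3 n [MOD 24] := by
  have h8 : Tcount 2 3 (9 * n + 1) ≡ 3 * Tcount 2 3 n [MOD 8] := by
    rw [← ZMod.natCast_eq_natCast_iff]
    push_cast
    rw [natCast_Tcount_two_three, natCast_Tcount_two_three,
      show 8 * (9 * n + 1) + 1 = 9 * (8 * n + 1) by ring]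
    simpa using (ZMod.intCast_eq_intCast_iff _ _ 8).2 (signedRepSum_nine_mul_modEq (8 * n + 1))
  have h3 : Tcount 2 3 (9 * n + 1) ≡ 3 * Tcount 2 3 n [MOD 3] := by
    have := dvd_Tcount_of_not_dvd Nat.prime_three (by omega : ¬ 3 ∣ 9 * n + 1) 2
    exact ((Nat.modEq_zero_iff_dvd).2 this).trans (Nat.modEq_zero_iff_dvd.2 ⟨_, rfl⟩).symm
  exact (Nat.modEq_and_modEq_iff_modEq_mul (by norm_num : Nat.Coprime 8 3)).1 ⟨h8, h3⟩

theorem stmt8_general (n : ℕ) :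
    (¬ 3 ∣ n → Tcount 2 3 n ≡ Tcount 2 3 (81 * n + 10) [MOD 24]) ∧
      3 * Tcount 2 3 n ≡ Tcount 2 3 (9 * n + 1) [MOD 24] := by
  have h₁ := Tcount_nine_mul_add_one_modEq n
  have h₂ := Tcount_nine_mul_add_one_modEq (9 * n + 1)
  rw [show 9 * (9 * n + 1) + 1 = 81 * n + 10 by ring] at h₂
  refine ⟨fun hn ↦ ?_, h₁.symm⟩
  obtain ⟨c, hc⟩ := dvd_Tcount_of_not_dvd Nat.prime_three hn 2
  calc Tcount 2 3 n ≡ 3 * (3 * Tcount 2 3 n) [MOD 24] :=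
        (Nat.modEq_iff_dvd' (by omega)).2 ⟨c, by omega⟩
    _ ≡ 3 * Tcount 2 3 (9 * n + 1) [MOD 24] := (h₁.mul_left 3).symm
    _ ≡ Tcount 2 3 (81 * n + 10) [MOD 24] := h₂.symm

theorem stmt8 (n : ℕ) :
    Tcount 2 3 (3 * n + 1) ≡ Tcount 2 3 (243 * n + 91) [MOD 24] ∧
    3 * Tcount 2 3 (3 * n + 1) ≡ Tcount 2 3 (27 * n + 10) [MOD 24] := by
  have h := stmt8_general (3 * n + 1)
  exact ⟨by convert h.1 (by omega) using 2; ring, by convert h.2 using 2; ring⟩
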